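/- If the semicascade (Ω,φ) is tame and the proximality relation P(Ω,φ) is transitive, then for every x ∈ C(Ω,ℝ) and every finite signed Borel measure μ on Ω the Cesàro averages (1/n) Σ_{j=0}^{n−1} ∫ x∘φ^j dμ converge as n → ∞. -/

import Mathlib

open MeasureTheory Filter Topology

/-- The pairing `⟨f, μ⟩ = ∫ f dμ` of a function with a finite signed Borel measure,
defined via the Jordan decomposition of the signed measure. -/
noncomputable def spair {Ω : Type*} [MeasurableSpace Ω] (f : Ω → ℝ) (μ : SignedMeasure Ω) : ℝ :=
  (∫ ω, f ω ∂μ.toJordanDecomposition.posPart) - (∫ ω, f ω ∂μ.toJordanDecomposition.negPart)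

/-- The weak* topology on the space `X*` of finite signed Borel measures, i.e. the topology
of convergence of the pairings with all continuous functions `x ∈ C(Ω, ℝ)`. With this topology
on the codomain, the product topology on `SignedMeasure Ω → SignedMeasure Ω` is precisely the
weak* operator topology (pointwise convergence with `X*` in its weak* topology). -/
noncomputable instance weakStarTopology {Ω : Type*} [TopologicalSpace Ω] [MeasurableSpace Ω] :
    TopologicalSpace (SignedMeasure Ω) :=
  TopologicalSpace.induced (fun μ => fun x : C(Ω, ℝ) => spair (⇑x) μ) inferInstance

/-- The operator `V : X* → X*`, pushforward by `φ`: `(Vμ)(e) = μ(φ⁻¹ e)`. -/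
noncomputable def Vop {Ω : Type*} [MeasurableSpace Ω] (φ : Ω → Ω) :
    SignedMeasure Ω → SignedMeasure Ω :=
  fun μ => μ.map φ

/-- The Dirac measure at `ω`, as a signed measure. -/
noncomputable def diracSM {Ω : Type*} [MeasurableSpace Ω] (ω : Ω) : SignedMeasure Ω :=
  (Measure.dirac ω).toSignedMeasure

/-- `Γ(Ω,φ)`: the closure of `{Vⁿ : n ≥ 0}` in the weak* operator topology. -/
def GammaSG {Ω : Type*} [TopologicalSpace Ω] [MeasurableSpace Ω] (φ : Ω → Ω) :
    Set (SignedMeasure Ω → SignedMeasure Ω) :=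
  closure (Set.range fun n : ℕ => (Vop φ)^[n])

/-- `G(Ω,φ)`: the closure of the convex hull of `{Vⁿ : n ≥ 0}` in the weak* operator topology. -/
def GSG {Ω : Type*} [TopologicalSpace Ω] [MeasurableSpace Ω] (φ : Ω → Ω) :
    Set (SignedMeasure Ω → SignedMeasure Ω) :=
  closure (convexHull ℝ (Set.range fun n : ℕ => (Vop φ)^[n]))

/-- The kernel `L = {Q ∈ G(Ω,φ) : V ∘ Q = Q}` of the semigroup `G(Ω,φ)`. -/
def Lker {Ω : Type*} [TopologicalSpace Ω] [MeasurableSpace Ω] (φ : Ω → Ω) :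
    Set (SignedMeasure Ω → SignedMeasure Ω) :=
  {Q ∈ GSG φ | Vop φ ∘ Q = Q}

/-- The Ellis enveloping semigroup `E(Ω,φ)`: the closure of the iterates `{φⁿ : n ≥ 0}`
in the product topology (pointwise convergence) on `Ω → Ω`. -/
def EllisE {Ω : Type*} [TopologicalSpace Ω] (φ : Ω → Ω) : Set (Ω → Ω) :=
  closure (Set.range fun n : ℕ => φ^[n])

/-- `E_b(Ω,φ)`: the smallest set of self-maps of `Ω` containing the iterates `{φⁿ : n ≥ 0}`
and sequentially closed under pointwise convergence. -/
inductive Eb {Ω : Type*} [TopologicalSpace Ω] (φ : Ω → Ω) : (Ω → Ω) → Prop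
  | iterate (n : ℕ) : Eb φ φ^[n]
  | lim (p : ℕ → Ω → Ω) (q : Ω → Ω) (hp : ∀ k, Eb φ (p k))
      (hq : ∀ ω, Tendsto (fun k => p k ω) atTop (𝓝 (q ω))) : Eb φ q

/-- `E₁(Ω,φ)`: the set of pointwise limits of sequences of iterates `φ^{n_k}`. -/
def E1SG {Ω : Type*} [TopologicalSpace Ω] (φ : Ω → Ω) : Set (Ω → Ω) :=
  {p | ∃ n : ℕ → ℕ, ∀ ω, Tendsto (fun k => φ^[n k] ω) atTop (𝓝 (p ω))}

/-- An operator `P ∈ Γ(Ω,φ)` with `p = πP` is regular if `p` is Borel measurable and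
`(Pμ)(e) = μ(p⁻¹ e)` for every Borel probability measure `μ` and Borel set `e`. -/
def RegularOperator {Ω : Type*} [TopologicalSpace Ω] [MeasurableSpace Ω]
    (P : SignedMeasure Ω → SignedMeasure Ω) (p : Ω → Ω) : Prop :=
  Measurable p ∧ ∀ (μ : Measure Ω) [IsProbabilityMeasure μ],
    ∀ e : Set Ω, MeasurableSet e → P μ.toSignedMeasure e = (μ (p ⁻¹' e)).toReal

/-- A minimal set of the semicascade `(Ω,φ)`: a nonempty closed `φ`-invariant set containing
no proper nonempty closed `φ`-invariant subset. -/
def IsMinimalSet {Ω : Type*} [TopologicalSpace Ω] (φ : Ω → Ω) (m : Set Ω) : Prop :=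
  m.Nonempty ∧ IsClosed m ∧ Set.MapsTo φ m m ∧
    ∀ m' ⊆ m, m'.Nonempty → IsClosed m' → Set.MapsTo φ m' m' → m' = m

/-- The orbit closure of a point `ω`: the closure of the trajectory `{φⁿ ω : n ≥ 0}`. -/
def orbitClosure {Ω : Type*} [TopologicalSpace Ω] (φ : Ω → Ω) (ω : Ω) : Set Ω :=
  closure (Set.range fun n : ℕ => φ^[n] ω)

/-- A `φ`-ergodic measure: a `φ`-invariant Borel probability measure `μ` such that
`μ(e) ∈ {0,1}` for every Borel set `e` with `φ⁻¹ e = e`. -/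
def IsErgodicMeasure {Ω : Type*} [MeasurableSpace Ω] (φ : Ω → Ω) (μ : Measure Ω) : Prop :=
  IsProbabilityMeasure μ ∧ (∀ e : Set Ω, MeasurableSet e → μ (φ ⁻¹' e) = μ e) ∧
    (∀ e : Set Ω, MeasurableSet e → φ ⁻¹' e = e → μ e = 0 ∨ μ e = 1)

/-- The support of a Borel measure: the smallest closed set of full measure
(the intersection of all closed sets of full measure). -/
def msupp {Ω : Type*} [TopologicalSpace Ω] [MeasurableSpace Ω] (μ : Measure Ω) : Set Ω :=
  ⋂₀ {s : Set Ω | IsClosed s ∧ μ sᶜ = 0}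

/-- The semicascade `(Ω,φ)` is tame: for every continuous `x` and every strictly increasing
sequence `n(1) < n(2) < ⋯`, the infimum over finitely supported real coefficients `a` with
`Σ|aₖ| = 1` of the sup-norms `‖Σₖ aₖ · (x ∘ φ^{n(k)})‖` is `0`. -/
def Tame {Ω : Type*} [TopologicalSpace Ω] [CompactSpace Ω] (φ : Ω → Ω)
    (hφ : Continuous φ) : Prop :=
  ∀ (x : C(Ω, ℝ)) (n : ℕ → ℕ), StrictMono n →
    sInf {r : ℝ | ∃ a : ℕ →₀ ℝ, (∑ k ∈ a.support, |a k|) = 1 ∧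
      r = ‖∑ k ∈ a.support, a k • x.comp ⟨φ^[n k], hφ.iterate (n k)⟩‖} = 0

/-- Points `a, b` are proximal: `inf_{n ≥ 0} d(φⁿ a, φⁿ b) = 0`. -/
def Proximal {Ω : Type*} [PseudoMetricSpace Ω] (φ : Ω → Ω) (a b : Ω) : Prop :=
  (⨅ n : ℕ, dist (φ^[n] a) (φ^[n] b)) = 0

variable {Ω : Type*} [MetricSpace Ω] [CompactSpace Ω] [Nonempty Ω]
  [MeasurableSpace Ω] [BorelSpace Ω]

/-!
By Rosenthal's theorem, tameness says that no subsequence of `f ∘ φ^[n]` is independent. For every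
finite measure such a sequence is totally bounded in `L¹`. This property passes to its convex hull:
if elements of the hull formed an independent sequence, fair coin flips along their level sets
would produce a probability measure for which they stay `L¹`-separated. A Baire-type construction
of an independent sequence then shows that Birkhoff averages of `f` along long orbit segments
cannot oscillate across a gap `(α, β)` on every nonempty relatively open subset of a set `D`.

On a minimal set every invariant measure has full support, so two invariant measures with different
integrals of `f` would create such an oscillation; hence `∫ f` is constant on the invariant measures
of a minimal set. If a closed invariant set `S` contains only one minimal set `M`, any finite set of
points of `S` can be moved simultaneously close to `M`, and the same argument on the support of an
invariant measure maximizing `∫ f` shows that `∫ f` takes a single value on the invariant measures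
of `S` too, i.e. the averages of `f` converge uniformly on `S`.

Every point is proximal to some point of each minimal set in its orbit closure (apply an idempotent
of the Ellis semigroup). When proximality is transitive, each orbit closure therefore contains a
unique minimal set, so the Birkhoff averages converge pointwise, and dominated convergence gives the
convergence of their integrals.
-/

section Independence

variable {ι X : Type*}

/-- Rosenthal's Boolean independence of the family of pairs `({f i < α}, {β < f i})`: any finite
pattern of choices between the two members of each pair is realised by some point. For `α < β` it
makes a uniformly bounded family equivalent to the unit vector basis of `ℓ¹`. -/
def IsIndependent (f : ι → X → ℝ) (α β : ℝ) : Prop :=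
  ∀ s t : Finset ι, Disjoint s t → ∃ p, (∀ i ∈ s, f i p < α) ∧ ∀ i ∈ t, β < f i p

/-- A sequence of functions none of whose subsequences is independent at two separated levels.
By Rosenthal's dichotomy, for uniformly bounded sequences this says that no subsequence spans `ℓ¹`
in the supremum norm. -/
def IsTameSeq (f : ℕ → X → ℝ) : Prop :=
  ∀ ψ : ℕ → ℕ, StrictMono ψ → ∀ α β, α < β → ¬ IsIndependent (f ∘ ψ) α β

theorem exists_strictMono_forall_image_range {F : Filter ℕ} [F.NeBot] (hF : F ≤ atTop)
    {good : Finset ℕ → Prop} (h₀ : good ∅)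
    (h : ∀ I, good I → ∀ᶠ n in F, good (insert n I)) :
    ∃ ψ : ℕ → ℕ, StrictMono ψ ∧ ∀ K, good ((Finset.range K).image ψ) := by
  have hnext (I : {I // good I}) : ∃ n, good (insert n I.1) ∧ ∀ i ∈ I.1, i < n :=
    ((h I I.2).and <| (Finset.eventually_all I.1).2 fun i _ => hF (eventually_gt_atTop i)).exists
  choose next hgood hlt using hnext
  let I : ℕ → {I // good I} :=
    fun K => Nat.rec ⟨∅, h₀⟩ (fun _ J => ⟨insert (next J) J.1, hgood J⟩) K
  have himage (K : ℕ) : (Finset.range K).image (fun k => next (I k)) = (I K).1 := by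
    induction K with
    | zero => rfl
    | succ K ih => rw [Finset.range_add_one, Finset.image_insert, ih]
  refine ⟨fun k => next (I k), strictMono_nat_of_lt_succ fun k => ?_, fun K => ?_⟩
  · exact hlt (I (k + 1)) _ (Finset.mem_insert_self _ _)
  · exact himage K ▸ (I K).2

theorem exists_strictMono_isIndependent {F : Filter ℕ} [F.NeBot] (hF : F ≤ atTop)
    {f : ℕ → X → ℝ} {α β : ℝ} {big : Set X → Prop} {D : Set X} (hD : big D)
    (hne : ∀ W, big W → W.Nonempty)
    (hsplit : ∀ W, big W → ∀ᶠ n in F, big (W ∩ {p | f n p < α}) ∧ big (W ∩ {p | β < f n p})) :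
    ∃ ψ : ℕ → ℕ, StrictMono ψ ∧ IsIndependent (f ∘ ψ) α β := by
  let cell (s t : Finset ℕ) : Set X := {p ∈ D | (∀ i ∈ s, f i p < α) ∧ ∀ i ∈ t, β < f i p}
  have hcell_low (n : ℕ) (s t) : cell (insert n s) t = cell s t ∩ {p | f n p < α} := by
    ext p; simp only [cell, Finset.forall_mem_insert, Set.mem_ofPred_eq, Set.mem_inter_iff]; tauto
  have hcell_high (n : ℕ) (s t) : cell s (insert n t) = cell s t ∩ {p | β < f n p} := by
    ext p; simp only [cell, Finset.forall_mem_insert, Set.mem_ofPred_eq, Set.mem_inter_iff]; tauto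
  obtain ⟨ψ, hψ, hbig⟩ := exists_strictMono_forall_image_range hF
    (good := fun I => ∀ t ∈ I.powerset, big (cell (I \ t) t)) (by simpa [cell] using hD)
    fun I hI => by
      filter_upwards [(Finset.eventually_all I.powerset).2 fun t ht => hsplit _ (hI t ht),
        (Finset.eventually_all I).2 fun i _ => hF (eventually_gt_atTop i)] with n hn hlt t ht
      have hnI : n ∉ I := fun h => (hlt n h).false
      rw [Finset.powerset_insert, Finset.mem_union, Finset.mem_image] at ht
      obtain ht | ⟨t, ht, rfl⟩ := ht
      · rw [Finset.insert_sdiff_of_notMem _ fun h => hnI (Finset.mem_powerset.1 ht h), hcell_low]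
        exact (hn t ht).1
      · rw [Finset.insert_sdiff_insert, Finset.sdiff_insert_of_notMem hnI, hcell_high]
        exact (hn t ht).2
  refine ⟨ψ, hψ, fun s t hst => ?_⟩
  obtain ⟨K, hK⟩ := (s ∪ t).exists_nat_subset_range
  have hmem {i : ℕ} (hi : i ∈ s ∪ t) : ψ i ∈ (Finset.range K).image ψ :=
    Finset.mem_image_of_mem ψ (hK hi)
  obtain ⟨p, -, hlow, hhigh⟩ := hne _ <| hbig K (t.image ψ) <| Finset.mem_powerset.2 <|
    Finset.image_subset_image <| Finset.subset_union_right.trans hK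
  refine ⟨p, fun i hi => hlow _ ?_, fun i hi => hhigh _ (Finset.mem_image_of_mem ψ hi)⟩
  exact Finset.mem_sdiff.2 ⟨hmem (Finset.mem_union_left t hi), fun h =>
    Finset.disjoint_left.1 hst hi (hψ.injective.mem_finset_image.1 h)⟩

theorem IsIndependent.mul_sum_abs_le_norm [TopologicalSpace X] [CompactSpace X]
    {f : ι → C(X, ℝ)} {α β : ℝ} (h : IsIndependent (fun i => f i) α β) (a : ι →₀ ℝ) :
    (β - α) * ∑ i ∈ a.support, |a i| ≤ 2 * ‖∑ i ∈ a.support, a i • f i‖ := by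
  set g := ∑ i ∈ a.support, a i • f i with hg
  have hdisj : Disjoint (a.support.filter fun i => a i < 0)
      (a.support.filter fun i => ¬ a i < 0) := Finset.disjoint_filter_filter_not _ _ _
  obtain ⟨p, hp_low, hp_high⟩ := h _ _ hdisj
  obtain ⟨q, hq_low, hq_high⟩ := h _ _ hdisj.symm
  have hterm (i : ι) (hi : i ∈ a.support) : (β - α) * |a i| ≤ a i * f i p - a i * f i q := by
    rcases lt_or_ge (a i) 0 with ha | ha
    · have hp := hp_low i (Finset.mem_filter.2 ⟨hi, ha⟩)
      have hq := hq_high i (Finset.mem_filter.2 ⟨hi, ha⟩)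
      rw [abs_of_neg ha]
      nlinarith
    · have hp := hp_high i (Finset.mem_filter.2 ⟨hi, ha.not_gt⟩)
      have hq := hq_low i (Finset.mem_filter.2 ⟨hi, ha.not_gt⟩)
      rw [abs_of_nonneg ha]
      nlinarith
  calc (β - α) * ∑ i ∈ a.support, |a i|
      ≤ ∑ i ∈ a.support, (a i * f i p - a i * f i q) := by
        rw [Finset.mul_sum]; exact Finset.sum_le_sum hterm
    _ = g p - g q := by
        simp only [hg, ContinuousMap.coe_sum, ContinuousMap.coe_smul, Finset.sum_apply,
          Pi.smul_apply, smul_eq_mul, Finset.sum_sub_distrib]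
    _ ≤ 2 * ‖g‖ := by
        have hp := (abs_le.1 (g.norm_coe_le_norm p)).2
        have hq := (abs_le.1 (g.norm_coe_le_norm q)).1
        linarith

theorem Tame.isTameSeq [TopologicalSpace X] [CompactSpace X] {φ : X → X} {hφ : Continuous φ}
    (h : Tame φ hφ) (f : C(X, ℝ)) : IsTameSeq fun n => f ∘ φ^[n] := by
  intro ψ hψ α β hαβ hind
  have hlower : (β - α) / 2 ≤ 0 := by
    rw [← h f ψ hψ]
    refine le_csInf ⟨_, Finsupp.single 0 1, by simp, rfl⟩ ?_
    rintro _ ⟨a, ha, rfl⟩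
    have := IsIndependent.mul_sum_abs_le_norm
      (f := fun k => f.comp ⟨φ^[ψ k], hφ.iterate (ψ k)⟩) hind a
    rw [ha] at this
    linarith
  linarith

end Independence

section MeanConvergence

variable {X : Type*} [MeasurableSpace X] {m : Measure X} {U : Ultrafilter ℕ} {f : ℕ → X → ℝ}

theorem IsTameSeq.exists_subset_ae_le_or_ae_ge (hf : IsTameSeq f) (hmeas : ∀ n, Measurable (f n))
    (hU : U ≤ (atTop : Filter ℕ)) {α β : ℝ} (hαβ : α < β) {D : Set X} (hD : MeasurableSet D)
    (hD₀ : m D ≠ 0) :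
    ∃ W ⊆ D, MeasurableSet W ∧ m W ≠ 0 ∧ ((∀ᶠ n in U, ∀ᵐ p ∂m.restrict W, α ≤ f n p) ∨
      ∀ᶠ n in U, ∀ᵐ p ∂m.restrict W, f n p ≤ β) := by
  by_contra! hcon
  obtain ⟨ψ, hψ, hind⟩ := exists_strictMono_isIndependent hU (f := f) (α := α) (β := β)
    (big := fun W => W ⊆ D ∧ MeasurableSet W ∧ m W ≠ 0) ⟨subset_rfl, hD, hD₀⟩
    (fun W hW => nonempty_of_measure_ne_zero hW.2.2) fun W ⟨hWD, hW, hW₀⟩ => by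
      obtain ⟨hlow, hhigh⟩ := hcon W hWD hW hW₀
      filter_upwards [hlow, hhigh] with n hn_low hn_high
      have hlow_meas : MeasurableSet {p | f n p < α} := measurableSet_lt (hmeas n) measurable_const
      have hhigh_meas : MeasurableSet {p | β < f n p} := measurableSet_lt measurable_const (hmeas n)
      rw [frequently_ae_iff, Measure.restrict_apply hlow_meas, Set.inter_comm] at hn_low
      rw [frequently_ae_iff, Measure.restrict_apply hhigh_meas, Set.inter_comm] at hn_high
      exact ⟨⟨Set.inter_subset_left.trans hWD, hW.inter hlow_meas, hn_low⟩,
        Set.inter_subset_left.trans hWD, hW.inter hhigh_meas, hn_high⟩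
  exact hf ψ hψ α β hαβ hind

theorem IsTameSeq.exists_subset_ae_mem_Icc_pow (hf : IsTameSeq f) (hmeas : ∀ n, Measurable (f n))
    (hU : U ≤ (atTop : Filter ℕ)) {D : Set X} (hD : MeasurableSet D) (hD₀ : m D ≠ 0) {a l : ℝ}
    (hl : 0 < l) (hfD : ∀ᶠ n in U, ∀ᵐ p ∂m.restrict D, f n p ∈ Set.Icc a (a + l)) (j : ℕ) :
    ∃ W ⊆ D, MeasurableSet W ∧ m W ≠ 0 ∧
      ∃ b, ∀ᶠ n in U, ∀ᵐ p ∂m.restrict W, f n p ∈ Set.Icc b (b + (2 / 3) ^ j * l) := by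
  induction j with
  | zero => exact ⟨D, subset_rfl, hD, hD₀, a, by simpa using hfD⟩
  | succ j ih =>
    obtain ⟨W, hWD, hW, hW₀, b, hb⟩ := ih
    set r := (2 / 3 : ℝ) ^ j * l with hr
    have hr_pos : 0 < r := by positivity
    rw [show (2 / 3 : ℝ) ^ (j + 1) * l = 2 / 3 * r by rw [hr]; ring]
    obtain ⟨V, hVW, hV, hV₀, hsplit⟩ := hf.exists_subset_ae_le_or_ae_ge hmeas hU
      (show b + r / 3 < b + 2 / 3 * r by linarith) hW hW₀
    refine ⟨V, hVW.trans hWD, hV, hV₀, ?_⟩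
    rcases hsplit with hge | hle
    · refine ⟨b + r / 3, ?_⟩
      filter_upwards [hb, hge] with n hn hn_ge
      filter_upwards [ae_restrict_of_ae_restrict_of_subset hVW hn, hn_ge] with p hp hp_ge
      exact ⟨hp_ge, by linarith [hp.2]⟩
    · refine ⟨b, ?_⟩
      filter_upwards [hb, hle] with n hn hn_le
      filter_upwards [ae_restrict_of_ae_restrict_of_subset hVW hn, hn_le] with p hp hp_le
      exact ⟨hp.1, hp_le⟩

theorem IsTameSeq.exists_subset_ae_abs_sub_le (hf : IsTameSeq f) (hmeas : ∀ n, Measurable (f n))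
    {C : ℝ} (hC : ∀ n p, |f n p| ≤ C) (hU : U ≤ (atTop : Filter ℕ)) {δ : ℝ} (hδ : 0 < δ)
    {D : Set X} (hD : MeasurableSet D) (hD₀ : m D ≠ 0) :
    ∃ W ⊆ D, MeasurableSet W ∧ m W ≠ 0 ∧
      ∀ᶠ q in (U ×ˢ U : Filter (ℕ × ℕ)), ∀ᵐ p ∂m.restrict W, |f q.1 p - f q.2 p| ≤ δ := by
  have hl : 0 < 2 * |C| + 1 := by positivity
  obtain ⟨j, hj⟩ := exists_pow_lt_of_lt_one (div_pos hδ hl) (show (2 / 3 : ℝ) < 1 by norm_num)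
  have hrange : ∀ᶠ n in U, ∀ᵐ p ∂m.restrict D, f n p ∈ Set.Icc (-|C|) (-|C| + (2 * |C| + 1)) :=
    .of_forall fun n => ae_of_all _ fun p => by
      have := abs_le.1 ((hC n p).trans (le_abs_self C))
      exact ⟨this.1, by linarith⟩
  obtain ⟨W, hWD, hW, hW₀, b, hb⟩ := hf.exists_subset_ae_mem_Icc_pow hmeas hU hD hD₀ hl hrange j
  refine ⟨W, hWD, hW, hW₀, ?_⟩
  filter_upwards [hb.prod_mk hb] with q hq
  filter_upwards [hq.1, hq.2] with p hp₁ hp₂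
  rw [lt_div_iff₀ hl] at hj
  exact abs_sub_le_iff.2 ⟨by linarith [hp₁.2, hp₂.1], by linarith [hp₁.1, hp₂.2]⟩

theorem exists_measurableSet_measure_compl_lt [IsFiniteMeasure m] {P : Set X → Prop}
    (h_empty : P ∅) (h_union : ∀ A B, P A → P B → P (A ∪ B))
    (h_pos : ∀ D, MeasurableSet D → m D ≠ 0 → ∃ A ⊆ D, MeasurableSet A ∧ m A ≠ 0 ∧ P A)
    {η : ENNReal} (hη : 0 < η) : ∃ A, MeasurableSet A ∧ P A ∧ m Aᶜ < η := by
  set masses := m '' {A | MeasurableSet A ∧ P A}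
  obtain ⟨u, -, hu_lim, hu⟩ := exists_seq_tendsto_sSup (S := masses)
    ⟨m ∅, ∅, ⟨MeasurableSet.empty, h_empty⟩, rfl⟩ (OrderTop.bddAbove _)
  choose A hA hAu using hu
  have hexhaust : m (⋃ n, A n)ᶜ = 0 := by
    by_contra h₀
    obtain ⟨B, hB, hB_meas, hB₀, hPB⟩ := h_pos _ (MeasurableSet.iUnion fun n => (hA n).1).compl h₀
    have hle (n : ℕ) : u n + m B ≤ sSup masses := by
      have hdisj : Disjoint (A n) B :=
        Set.disjoint_left.2 fun p hp hpB => hB hpB (Set.mem_iUnion_of_mem n hp)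
      rw [← hAu n, ← measure_union hdisj hB_meas]
      exact le_sSup ⟨_, ⟨(hA n).1.union hB_meas, h_union _ _ (hA n).2 hPB⟩, rfl⟩
    have hfin : sSup masses ≠ ⊤ := ne_top_of_le_ne_top (measure_ne_top m Set.univ) <|
      sSup_le <| Set.forall_mem_image.2 fun _ _ => measure_mono (Set.subset_univ _)
    have := le_of_tendsto' (hu_lim.add_const (m B)) hle
    exact hB₀ (by simpa using ENNReal.le_sub_of_add_le_left hfin this)
  have hacc (n : ℕ) : MeasurableSet (Set.accumulate A n) ∧ P (Set.accumulate A n) := by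
    induction n with
    | zero => simpa using hA 0
    | succ n ih =>
      rw [Set.accumulate_succ]
      exact ⟨ih.1.union (hA _).1, h_union _ _ ih.2 (hA _).2⟩
  have hlim : Tendsto (fun n => m (Set.accumulate A n)ᶜ) atTop (𝓝 0) := by
    rw [← hexhaust, ← Set.iUnion_accumulate, Set.compl_iUnion]
    exact tendsto_measure_iInter_atTop (fun n => (hacc n).1.compl.nullMeasurableSet)
      (fun _ _ h => Set.compl_subset_compl.2 (Set.monotone_accumulate h)) ⟨0, measure_ne_top _ _⟩
  obtain ⟨n, hn⟩ := (hlim.eventually_lt_const hη).exists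
  exact ⟨_, (hacc n).1, (hacc n).2, hn⟩

theorem IsTameSeq.eventually_integral_abs_sub_le [IsFiniteMeasure m] (hf : IsTameSeq f)
    (hmeas : ∀ n, Measurable (f n)) {C : ℝ} (hC : ∀ n p, |f n p| ≤ C)
    (hU : U ≤ (atTop : Filter ℕ)) {ε : ℝ} (hε : 0 < ε) :
    ∀ᶠ q in (U ×ˢ U : Filter (ℕ × ℕ)), ∫ p, |f q.1 p - f q.2 p| ∂m ≤ ε := by
  set δ := ε / (2 * (m.real Set.univ + 1)) with hδ_def
  set η := ε / (4 * (|C| + 1)) with hη_def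
  have hδ : 0 < δ := by positivity
  have hη : 0 < η := by positivity
  obtain ⟨A, hA, hclose, hAη⟩ := exists_measurableSet_measure_compl_lt (m := m)
    (P := fun A => ∀ᶠ q in (U ×ˢ U : Filter (ℕ × ℕ)),
      ∀ᵐ p ∂m.restrict A, |f q.1 p - f q.2 p| ≤ δ)
    (by simp) (fun A B hA hB => by
      filter_upwards [hA, hB] with q hqA hqB using ae_restrict_union_iff _ _ _ |>.2 ⟨hqA, hqB⟩)
    (fun D hD hD₀ => hf.exists_subset_ae_abs_sub_le hmeas hC hU hδ hD hD₀)
    (ENNReal.ofReal_pos.2 hη)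
  have hdiff (i j : ℕ) (p : X) : |f i p - f j p| ≤ 2 * |C| := by
    have := abs_sub (f i p) (f j p)
    linarith [hC i p, hC j p, le_abs_self C]
  filter_upwards [hclose] with q hq
  have hint : Integrable (fun p => |f q.1 p - f q.2 p|) m :=
    .of_bound ((hmeas q.1).sub (hmeas q.2)).abs.aestronglyMeasurable (2 * |C|)
      (ae_of_all _ fun p => by simpa using hdiff q.1 q.2 p)
  have hA_le : ∫ p in A, |f q.1 p - f q.2 p| ∂m ≤ δ * m.real A :=
    (Real.le_norm_self _).trans <| norm_setIntegral_le_of_norm_le_const_ae (measure_lt_top m A)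
      (by simpa using hq)
  have hAc_le : ∫ p in Aᶜ, |f q.1 p - f q.2 p| ∂m ≤ 2 * |C| * m.real Aᶜ :=
    (Real.le_norm_self _).trans <| norm_setIntegral_le_of_norm_le_const (measure_lt_top m Aᶜ)
      fun p _ => by simpa using hdiff q.1 q.2 p
  have hA_real : m.real A ≤ m.real Set.univ := measureReal_mono (Set.subset_univ A)
  have hAc_real : m.real Aᶜ ≤ η := ENNReal.toReal_le_of_le_ofReal hη.le hAη.le
  calc ∫ p, |f q.1 p - f q.2 p| ∂m
      = ∫ p in A, |f q.1 p - f q.2 p| ∂m + ∫ p in Aᶜ, |f q.1 p - f q.2 p| ∂m :=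
        (integral_add_compl hA hint).symm
    _ ≤ δ * (m.real Set.univ + 1) + 2 * (|C| + 1) * η := by
        refine add_le_add (hA_le.trans ?_) (hAc_le.trans ?_)
        · gcongr; linarith
        · gcongr; linarith
    _ = ε := by rw [hδ_def, hη_def]; field_simp; norm_num

end MeanConvergence

section TotallyBounded

variable {X : Type*} [TopologicalSpace X] [CompactSpace X] [MeasurableSpace X] [BorelSpace X]

theorem dist_toLp_one_eq_integral (m : Measure X) [IsFiniteMeasure m] (f g : C(X, ℝ)) :
    dist (ContinuousMap.toLp 1 m ℝ f) (ContinuousMap.toLp 1 m ℝ g) = ∫ p, |f p - g p| ∂m := by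
  rw [dist_eq_norm, ← map_sub, L1.norm_eq_integral_norm]
  refine integral_congr_ae ?_
  filter_upwards [ContinuousMap.coeFn_toLp (p := 1) (𝕜 := ℝ) m (f - g)] with p hp
  rw [hp, ContinuousMap.sub_apply, Real.norm_eq_abs]

theorem IsTameSeq.totallyBounded_range_toLp {f : ℕ → C(X, ℝ)} (hf : IsTameSeq fun n => f n)
    {C : ℝ} (hC : ∀ n, ‖f n‖ ≤ C) (m : Measure X) [IsFiniteMeasure m] :
    TotallyBounded (Set.range fun n => ContinuousMap.toLp 1 m ℝ (f n)) := by
  set F := fun n => ContinuousMap.toLp 1 m ℝ (f n)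
  rw [totallyBounded_iff_ultrafilter]
  intro u hu
  have : (comap F u).NeBot := comap_neBot_iff_compl_range.2 fun h =>
    Ultrafilter.compl_notMem_iff.2 (le_principal_iff.1 hu) h
  set U := Ultrafilter.of (comap F u)
  have hmap : U.map F = u := Ultrafilter.eq_of_le <| map_le_iff_le_comap.2 (Ultrafilter.of_le _)
  rw [← hmap, Ultrafilter.coe_map]
  rcases U.le_cofinite_or_eq_pure with hcofinite | ⟨n, hn⟩
  · rw [cauchy_map_iff', Metric.uniformity_basis_dist_le.tendsto_right_iff]
    intro ε hε
    simp only [F, Set.mem_ofPred_eq, dist_toLp_one_eq_integral]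
    exact hf.eventually_integral_abs_sub_le (fun n => (f n).continuous.measurable)
      (fun n p => ((f n).norm_coe_le_norm p).trans (hC n)) (Nat.cofinite_eq_atTop ▸ hcofinite) hε
  · rw [hn, Ultrafilter.coe_pure, map_pure]
    exact cauchy_pure

end TotallyBounded

section EmpiricalMeasure

variable {ι X : Type*} [MeasurableSpace X]

/-- The empirical measure `(#s)⁻¹ ∑ i ∈ s, δ_{t i}` of a finite nonempty family of points. -/
noncomputable def empiricalMeasure (s : Finset ι) (hs : s.Nonempty) (t : ι → X) :
    ProbabilityMeasure X :=
  ⟨(s.card : ENNReal)⁻¹ • ∑ i ∈ s, Measure.dirac (t i), ⟨by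
    simp [ENNReal.inv_mul_cancel, hs.ne_empty]⟩⟩

theorem integral_empiricalMeasure [MeasurableSingletonClass X] {s : Finset ι} (hs : s.Nonempty)
    (t : ι → X) (f : X → ℝ) :
    ∫ p, f p ∂(empiricalMeasure s hs t : Measure X) = (s.card : ℝ)⁻¹ * ∑ i ∈ s, f (t i) := by
  change ∫ p, f p ∂((s.card : ENNReal)⁻¹ • ∑ i ∈ s, Measure.dirac (t i)) = _
  rw [integral_smul_measure, integral_finsetSum_measure fun i _ => integrable_dirac (by simp)]
  simp

theorem tendsto_integral_continuousMap [TopologicalSpace X] [CompactSpace X]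
    [OpensMeasurableSpace X] {F : Filter ι} {μs : ι → ProbabilityMeasure X}
    {μ : ProbabilityMeasure X} (h : Tendsto μs F (𝓝 μ)) (f : C(X, ℝ)) :
    Tendsto (fun i => ∫ p, f p ∂(μs i : Measure X)) F (𝓝 (∫ p, f p ∂(μ : Measure X))) :=
  ProbabilityMeasure.tendsto_iff_forall_integral_tendsto.1 h (.mkOfCompact f)

end EmpiricalMeasure

section ConvexHull

variable {ι X : Type*}

-- The average over `A ⊆ I` is that over independent coin flips; pair `A ∌ i` with `insert i A`.
theorem IsIndependent.exists_half_sub_le_average {f : ι → X → ℝ} {α β : ℝ}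
    (hf : IsIndependent f α β) (I : Finset ι) :
    ∃ t : Finset ι → X, ∀ i ∈ I, ∀ j ∈ I, i ≠ j →
      (β - α) / 2 ≤ (I.powerset.card : ℝ)⁻¹ * ∑ A ∈ I.powerset, |f i (t A) - f j (t A)| := by
  classical
  have hpattern (A : Finset ι) : ∃ p, (∀ i ∈ I \ A, f i p < α) ∧ ∀ i ∈ A, β < f i p :=
    hf _ _ Finset.sdiff_disjoint
  choose t hlow hhigh using hpattern
  refine ⟨t, fun i hi j hj hij => ?_⟩
  set gap : Finset ι → ℝ := fun A => |f i (t A) - f j (t A)| with hgap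
  have hpair (A : Finset ι) (hA : A ∈ (I.erase i).powerset) :
      β - α ≤ gap A + gap (insert i A) := by
    have hiA : i ∉ A := fun h => Finset.notMem_erase i I (Finset.mem_powerset.1 hA h)
    by_cases hjA : j ∈ A
    · have := neg_abs_le (f i (t A) - f j (t A))
      have : 0 ≤ gap (insert i A) := abs_nonneg _
      linarith [hlow A i (Finset.mem_sdiff.2 ⟨hi, hiA⟩), hhigh A j hjA]
    · have := le_abs_self (f i (t (insert i A)) - f j (t (insert i A)))
      have : 0 ≤ gap A := abs_nonneg _
      have hj' : j ∈ I \ insert i A := by simp [hj, hjA, hij.symm]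
      linarith [hlow (insert i A) j hj', hhigh (insert i A) i (Finset.mem_insert_self i A)]
  have hsum : (I.erase i).powerset.card * (β - α) ≤ ∑ A ∈ I.powerset, gap A := by
    conv_rhs => rw [← Finset.insert_erase hi]
    rw [Finset.sum_powerset_insert (Finset.notMem_erase i I), ← Finset.sum_add_distrib,
      ← nsmul_eq_mul]
    exact Finset.card_nsmul_le_sum _ _ _ hpair
  have hcard : (I.powerset.card : ℝ) = 2 * (I.erase i).powerset.card := by
    rw [Finset.card_powerset, Finset.card_powerset, ← Finset.card_erase_add_one hi, pow_succ']
    norm_num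
  have hpos : (0 : ℝ) < (I.erase i).powerset.card := by simp
  rw [hcard, inv_mul_eq_div, le_div_iff₀ (by positivity)]
  linarith

variable [TopologicalSpace X] [T2Space X] [CompactSpace X] [MeasurableSpace X] [BorelSpace X]

theorem IsIndependent.exists_probabilityMeasure_half_sub_le_integral {f : ι → C(X, ℝ)} {α β : ℝ}
    (hf : IsIndependent (fun i => f i) α β) :
    ∃ μ : ProbabilityMeasure X, ∀ i j, i ≠ j → (β - α) / 2 ≤ ∫ p, |f i p - f j p| ∂μ := by
  choose t ht using hf.exists_half_sub_le_average
  let U := Ultrafilter.of (atTop : Filter (Finset ι))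
  let ν (I : Finset ι) := empiricalMeasure I.powerset (Finset.powerset_nonempty I) (t I)
  have hν : Tendsto ν U (𝓝 (U.map ν).lim) := (U.map ν).le_nhds_lim
  refine ⟨(U.map ν).lim, fun i j hij => ?_⟩
  have hlim := tendsto_integral_continuousMap hν
    ⟨fun p => |f i p - f j p|, ((f i).continuous.sub (f j).continuous).abs⟩
  refine ge_of_tendsto hlim ?_
  classical
  filter_upwards [Ultrafilter.of_le _ (eventually_ge_atTop {i, j})] with I hI
  have hmem := Finset.insert_subset_iff.1 hI
  rw [integral_empiricalMeasure]
  exact ht I i hmem.1 j (Finset.singleton_subset_iff.1 hmem.2) hij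

theorem IsTameSeq.not_isIndependent_of_mem_convexHull {f : ℕ → C(X, ℝ)}
    (hf : IsTameSeq fun n => f n) {C : ℝ} (hC : ∀ n, ‖f n‖ ≤ C) [Infinite ι] {y : ι → C(X, ℝ)}
    (hy : ∀ i, y i ∈ convexHull ℝ (Set.range f)) {α β : ℝ} (hαβ : α < β) :
    ¬ IsIndependent (fun i => y i) α β := by
  intro hind
  obtain ⟨μ, hsep⟩ := hind.exists_probabilityMeasure_half_sub_le_integral
  set L := ContinuousMap.toLp (E := ℝ) 1 (μ : Measure X) ℝ
  have hL_mem (i : ι) : L (y i) ∈ convexHull ℝ (Set.range fun n => L (f n)) := by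
    rw [Set.range_comp' L f]
    exact (L.toLinearMap.image_convexHull _).subset (Set.mem_image_of_mem L (hy i))
  obtain ⟨F, hF, hcover⟩ := Metric.totallyBounded_iff.1
    (hf.totallyBounded_range_toLp hC μ).convexHull ((β - α) / 4) (by linarith)
  have hnear (i : ι) : ∃ z : F, dist (L (y i)) z < (β - α) / 4 := by
    simpa using hcover (hL_mem i)
  choose z hz using hnear
  have : Finite F := hF
  obtain ⟨i, j, hij, hzz⟩ := Finite.exists_ne_map_eq_of_infinite z
  have hfar : (β - α) / 2 ≤ dist (L (y i)) (L (y j)) :=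
    (hsep i j hij).trans_eq (dist_toLp_one_eq_integral _ _ _).symm
  have := dist_triangle_right (L (y i)) (L (y j)) (z i)
  have hzj := hz j
  rw [← hzz] at hzj
  linarith [hz i]

theorem IsTameSeq.not_oscillating_of_mem_convexHull {f : ℕ → C(X, ℝ)}
    (hf : IsTameSeq fun n => f n) {C : ℝ} (hC : ∀ n, ‖f n‖ ≤ C) {y : ℕ → C(X, ℝ)}
    (hy : ∀ k, y k ∈ convexHull ℝ (Set.range f)) {α β : ℝ} (hαβ : α < β) {D : Set X}
    (hD : D.Nonempty) :
    ¬ ∀ O, IsOpen O → (O ∩ D).Nonempty → ∀ᶠ k in atTop,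
      (∃ p ∈ O ∩ D, y k p < α) ∧ ∃ p ∈ O ∩ D, β < y k p := by
  intro hosc
  obtain ⟨ψ, -, hψ⟩ := exists_strictMono_isIndependent le_rfl (f := fun k => y k) (α := α) (β := β)
    (big := fun W => ∃ O, IsOpen O ∧ W = O ∩ D ∧ W.Nonempty)
    ⟨Set.univ, isOpen_univ, (Set.univ_inter D).symm, hD⟩ (fun W ⟨_, _, _, hne⟩ => hne)
    fun W ⟨O, hO, hW, hne⟩ => by
      subst hW
      filter_upwards [hosc O hO hne] with k ⟨hlow, hhigh⟩
      exact ⟨⟨_, hO.inter (isOpen_lt (y k).continuous continuous_const),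
          Set.inter_right_comm _ _ _, hlow⟩,
        ⟨_, hO.inter (isOpen_lt continuous_const (y k).continuous),
          Set.inter_right_comm _ _ _, hhigh⟩⟩
  exact hf.not_isIndependent_of_mem_convexHull hC (fun k => hy (ψ k)) hαβ hψ

end ConvexHull

-- Markov's inequality for the deficit `C - g`.
theorem frequently_ae_mem_and_lt_of_integral {Y : Type*} [MeasurableSpace Y]
    {μ : Measure Y} [IsProbabilityMeasure μ]
    {g : Y → ℝ} {C β : ℝ} {s : Set Y} (hg : Integrable g μ) (hgC : ∀ᵐ p ∂μ, g p ≤ C)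
    (hβC : β ≤ C) (h : C - ∫ p, g p ∂μ < (C - β) * μ.real s) :
    ∃ᵐ p ∂μ, p ∈ s ∧ β < g p := by
  by_contra hnot
  have hle : ∀ᵐ p ∂μ, p ∈ s → C - β ≤ C - g p := by
    filter_upwards [not_frequently.1 hnot] with p hp hps
    by_contra! hlt
    exact hp ⟨hps, by linarith⟩
  refine h.not_ge ?_
  calc (C - β) * μ.real s
      ≤ (C - β) * μ.real {p | C - β ≤ C - g p} :=
        mul_le_mul_of_nonneg_left (ENNReal.toReal_mono (measure_ne_top _ _) (measure_mono_ae hle))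
          (sub_nonneg.2 hβC)
    _ ≤ ∫ p, (C - g p) ∂μ := mul_meas_ge_le_integral_of_nonneg
        (hgC.mono fun p hp => sub_nonneg.2 hp) ((integrable_const C).sub hg) _
    _ = C - ∫ p, g p ∂μ := by simp [integral_sub (integrable_const C) hg]

section BirkhoffAverage

variable {X : Type*} {φ : X → X}

theorem continuous_birkhoffAverage [TopologicalSpace X] (hφ : Continuous φ) {f : X → ℝ}
    (hf : Continuous f) (N : ℕ) : Continuous (birkhoffAverage ℝ φ f N) :=
  (continuous_finsetSum _ fun k _ => hf.comp (hφ.iterate k)).const_smul (N : ℝ)⁻¹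

theorem abs_birkhoffAverage_le {f : X → ℝ} {C : ℝ} (hf : ∀ p, |f p| ≤ C) (N : ℕ) (p : X) :
    |birkhoffAverage ℝ φ f N p| ≤ C := by
  have hsum : |∑ k ∈ Finset.range N, f (φ^[k] p)| ≤ N * C := by
    simpa using (Finset.abs_sum_le_sum_abs _ _).trans
      (Finset.sum_le_card_nsmul (Finset.range N) _ C fun k _ => hf (φ^[k] p))
  rw [birkhoffAverage, birkhoffSum, smul_eq_mul, abs_mul, abs_of_nonneg (by positivity),
    inv_mul_eq_div]
  exact div_le_of_le_mul₀ (by positivity) ((abs_nonneg _).trans (hf p)) (by linarith)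

theorem dist_birkhoffAverage_apply_le {f : X → ℝ} {C : ℝ} (hf : ∀ p, |f p| ≤ C) (N : ℕ)
    (p : X) :
    dist (birkhoffAverage ℝ φ f N (φ p)) (birkhoffAverage ℝ φ f N p) ≤ 2 * C / N := by
  rw [dist_birkhoffAverage_apply_birkhoffAverage]
  gcongr
  rw [Real.dist_eq]
  linarith [abs_sub (f (φ^[N] p)) (f p), hf (φ^[N] p), hf p]

variable [MeasurableSpace X] {μ : Measure X}

theorem integral_birkhoffAverage_eq_sum {f : X → ℝ} (hf : ∀ k, Integrable (fun p => f (φ^[k] p)) μ)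
    (N : ℕ) :
    ∫ p, birkhoffAverage ℝ φ f N p ∂μ
      = (N : ℝ)⁻¹ * ∑ k ∈ Finset.range N, ∫ p, f (φ^[k] p) ∂μ := by
  simp only [birkhoffAverage, birkhoffSum, smul_eq_mul]
  rw [integral_const_mul, integral_finsetSum _ fun k _ => hf k]

theorem integral_comp_of_measurePreserving (hμ : MeasurePreserving φ μ μ) {f : X → ℝ}
    (hf : AEStronglyMeasurable f μ) : ∫ p, f (φ p) ∂μ = ∫ p, f p ∂μ := by
  rw [← integral_map hμ.measurable.aemeasurable (hμ.map_eq.symm ▸ hf), hμ.map_eq]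

theorem integral_birkhoffAverage_eq_integral (hμ : MeasurePreserving φ μ μ) {f : X → ℝ}
    (hf : Integrable f μ) {N : ℕ} (hN : N ≠ 0) :
    ∫ p, birkhoffAverage ℝ φ f N p ∂μ = ∫ p, f p ∂μ := by
  have hiter (k : ℕ) : ∫ p, f (φ^[k] p) ∂μ = ∫ p, f p ∂μ :=
    integral_comp_of_measurePreserving (hμ.iterate k) hf.1
  rw [integral_birkhoffAverage_eq_sum fun k => (hμ.iterate k).integrable_comp_of_integrable hf]
  simp [hiter, hN]

end BirkhoffAverage

section InvariantMeasures

variable {X : Type*} [MetricSpace X] [MeasurableSpace X] [BorelSpace X] {φ : X → X} {S : Set X}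

/-- The `φ`-invariant Borel probability measures that are carried by the set `S`. -/
def invariantMeasures (φ : X → X) (S : Set X) : Set (ProbabilityMeasure X) :=
  {μ | MeasurePreserving φ (μ : Measure X) μ ∧ ∀ᵐ p ∂(μ : Measure X), p ∈ S}

theorem measurePreserving_iff_forall_integral_comp_eq (hφ : Continuous φ)
    {μ : Measure X} [IsFiniteMeasure μ] :
    MeasurePreserving φ μ μ ↔ ∀ f : C(X, ℝ), ∫ p, f (φ p) ∂μ = ∫ p, f p ∂μ := by
  refine ⟨fun h f => integral_comp_of_measurePreserving h f.continuous.aestronglyMeasurable,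
    fun h => ⟨hφ.measurable, ext_of_forall_integral_eq_of_IsFiniteMeasure fun f => ?_⟩⟩
  rw [integral_map hφ.aemeasurable f.continuous.aestronglyMeasurable]
  exact h f

variable [CompactSpace X]

theorem integrable_continuousMap (μ : Measure X) [IsFiniteMeasure μ] (f : C(X, ℝ)) :
    Integrable f μ :=
  f.continuous.integrable_of_hasCompactSupport (.of_compactSpace f)

theorem ae_mem_iff_integral_infDist_eq_zero (hS : IsClosed S) (hne : S.Nonempty)
    {μ : Measure X} [IsFiniteMeasure μ] :
    (∀ᵐ p ∂μ, p ∈ S) ↔ ∫ p, Metric.infDist p S ∂μ = 0 := by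
  rw [integral_eq_zero_iff_of_nonneg (fun _ => Metric.infDist_nonneg)
    (integrable_continuousMap μ ⟨_, Metric.continuous_infDist_pt S⟩)]
  exact eventually_congr (.of_forall fun p => hS.mem_iff_infDist_zero hne)

theorem continuous_integral_continuousMap (f : C(X, ℝ)) :
    Continuous fun μ : ProbabilityMeasure X => ∫ p, f p ∂(μ : Measure X) :=
  continuous_iff_continuousAt.2 fun _ => tendsto_integral_continuousMap tendsto_id f

theorem isCompact_invariantMeasures (hφ : Continuous φ) (hS : IsClosed S) (hne : S.Nonempty) :
    IsCompact (invariantMeasures φ S) := by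
  have hinv : IsClosed {μ : ProbabilityMeasure X |
      ∀ f : C(X, ℝ), ∫ p, f (φ p) ∂(μ : Measure X) = ∫ p, f p ∂(μ : Measure X)} := by
    simp only [Set.ofPred_forall]
    exact isClosed_iInter fun f => isClosed_eq
      (continuous_integral_continuousMap (f.comp ⟨φ, hφ⟩)) (continuous_integral_continuousMap f)
  have hcarried : IsClosed {μ : ProbabilityMeasure X |
      ∫ p, Metric.infDist p S ∂(μ : Measure X) = 0} :=
    isClosed_eq (continuous_integral_continuousMap ⟨_, Metric.continuous_infDist_pt S⟩)
      continuous_const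
  convert (hinv.inter hcarried).isCompact using 1
  ext μ
  exact and_congr (measurePreserving_iff_forall_integral_comp_eq hφ)
    (ae_mem_iff_integral_infDist_eq_zero hS hne)

variable {ι : Type*} {U : Ultrafilter ι} {N : ι → ℕ} {b : ι → X}

-- Krylov–Bogoliubov: the limit along `U` of the empirical measures of the orbit segments.
theorem exists_invariantMeasure_tendsto_birkhoffAverage (hφ : Continuous φ) (hS : IsClosed S)
    (hφS : Set.MapsTo φ S S) (hN : ∀ i, N i ≠ 0) (hNU : Tendsto N U atTop)
    (hb : ∀ i, b i ∈ S) :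
    ∃ μ ∈ invariantMeasures φ S, ∀ f : C(X, ℝ),
      Tendsto (fun i => birkhoffAverage ℝ φ f (N i) (b i)) U (𝓝 (∫ p, f p ∂(μ : Measure X))) := by
  have hne : S.Nonempty := by
    obtain ⟨i⟩ := U.nonempty_of_mem univ_mem
    exact ⟨b i, hb i⟩
  let ν (i : ι) := empiricalMeasure (Finset.range (N i)) (by simpa using hN i)
    fun j => φ^[j] (b i)
  have hlim (f : C(X, ℝ)) : Tendsto (fun i => birkhoffAverage ℝ φ f (N i) (b i)) U
      (𝓝 (∫ p, f p ∂((U.map ν).lim : Measure X))) := by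
    refine (tendsto_integral_continuousMap (U.map ν).le_nhds_lim f).congr fun i => ?_
    simp [ν, integral_empiricalMeasure, birkhoffAverage, birkhoffSum]
  refine ⟨(U.map ν).lim, ⟨?_, ?_⟩, hlim⟩
  · rw [measurePreserving_iff_forall_integral_comp_eq hφ]
    intro f
    have hdist : Tendsto (fun i => dist (birkhoffAverage ℝ φ f (N i) (φ (b i)))
        (birkhoffAverage ℝ φ f (N i) (b i))) U (𝓝 0) :=
      squeeze_zero (fun _ => dist_nonneg)
        (fun i => dist_birkhoffAverage_apply_le f.norm_coe_le_norm (N i) (b i))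
        ((tendsto_const_div_atTop_nhds_zero_nat _).comp hNU)
    refine tendsto_nhds_unique (hlim (f.comp ⟨φ, hφ⟩)) ?_
    have hshift : Tendsto (fun i => birkhoffAverage ℝ φ f (N i) (φ (b i))) U
        (𝓝 (∫ p, f p ∂((U.map ν).lim : Measure X))) :=
      (hlim f).congr_dist (by simpa only [dist_comm] using hdist)
    refine hshift.congr fun i => ?_
    simp only [birkhoffAverage, birkhoffSum, ContinuousMap.comp_apply, ContinuousMap.coe_mk,
      ← Function.iterate_succ_apply, ← Function.iterate_succ_apply' φ]
  · rw [ae_mem_iff_integral_infDist_eq_zero hS hne]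
    refine tendsto_nhds_unique (hlim ⟨_, Metric.continuous_infDist_pt S⟩)
      (tendsto_const_nhds.congr fun i => ?_)
    have hzero (k : ℕ) : Metric.infDist (φ^[k] (b i)) S = 0 :=
      Metric.infDist_zero_of_mem (hφS.iterate k (hb i))
    simp [birkhoffAverage, birkhoffSum, hzero]

theorem nonempty_invariantMeasures (hφ : Continuous φ) (hS : IsClosed S)
    (hφS : Set.MapsTo φ S S) (hne : S.Nonempty) : (invariantMeasures φ S).Nonempty := by
  obtain ⟨b, hb⟩ := hne
  obtain ⟨μ, hμ, -⟩ := exists_invariantMeasure_tendsto_birkhoffAverage (U := hyperfilter ℕ)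
    (N := fun k => k + 1) (b := fun _ => b) hφ hS hφS (fun k => k.succ_ne_zero)
    ((tendsto_add_atTop_nat 1).mono_left Nat.hyperfilter_le_atTop) fun _ => hb
  exact ⟨μ, hμ⟩

theorem exists_invariantMeasure_isMaxOn_integral (hφ : Continuous φ) (hS : IsClosed S)
    (hφS : Set.MapsTo φ S S) (hne : S.Nonempty) (f : C(X, ℝ)) :
    ∃ μ ∈ invariantMeasures φ S,
      IsMaxOn (fun ν : ProbabilityMeasure X => ∫ p, f p ∂(ν : Measure X))
        (invariantMeasures φ S) μ :=
  (isCompact_invariantMeasures hφ hS hne).exists_isMaxOn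
    (nonempty_invariantMeasures hφ hS hφS hne)
    (continuous_integral_continuousMap f).continuousOn

theorem exists_invariantMeasure_isMinOn_integral (hφ : Continuous φ) (hS : IsClosed S)
    (hφS : Set.MapsTo φ S S) (hne : S.Nonempty) (f : C(X, ℝ)) :
    ∃ μ ∈ invariantMeasures φ S,
      IsMinOn (fun ν : ProbabilityMeasure X => ∫ p, f p ∂(ν : Measure X))
        (invariantMeasures φ S) μ :=
  (isCompact_invariantMeasures hφ hS hne).exists_isMinOn
    (nonempty_invariantMeasures hφ hS hφS hne)
    (continuous_integral_continuousMap f).continuousOn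

theorem eventually_birkhoffAverage_lt (hφ : Continuous φ) (hS : IsClosed S)
    (hφS : Set.MapsTo φ S S) {f : C(X, ℝ)} {c : ℝ}
    (h : ∀ μ ∈ invariantMeasures φ S, ∫ p, f p ∂(μ : Measure X) < c) :
    ∀ᶠ N in atTop, ∀ b ∈ S, birkhoffAverage ℝ φ f N b < c := by
  by_contra hfreq
  obtain ⟨N, hN, hNb⟩ := extraction_of_frequently_atTop
    ((not_eventually.1 hfreq).and_eventually (eventually_ne_atTop 0))
  have hb (k : ℕ) : ∃ b ∈ S, c ≤ birkhoffAverage ℝ φ f (N k) b := by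
    simpa using (hNb k).1
  choose b hbS hb using hb
  obtain ⟨μ, hμ, hlim⟩ := exists_invariantMeasure_tendsto_birkhoffAverage (U := hyperfilter ℕ)
    hφ hS hφS (fun k => (hNb k).2) (hN.tendsto_atTop.mono_left Nat.hyperfilter_le_atTop) hbS
  exact (h μ hμ).not_ge (ge_of_tendsto' (hlim f) hb)

theorem tendstoUniformlyOn_birkhoffAverage (hφ : Continuous φ) (hS : IsClosed S)
    (hφS : Set.MapsTo φ S S) {f : C(X, ℝ)} {γ : ℝ}
    (h : ∀ μ ∈ invariantMeasures φ S, ∫ p, f p ∂(μ : Measure X) = γ) :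
    TendstoUniformlyOn (birkhoffAverage ℝ φ f) (fun _ => γ) atTop S := by
  rw [Metric.tendstoUniformlyOn_iff]
  intro ε hε
  have hupper := eventually_birkhoffAverage_lt (c := γ + ε) hφ hS hφS
    fun μ hμ => by linarith [h μ hμ]
  have hlower := eventually_birkhoffAverage_lt (f := -f) (c := -γ + ε) hφ hS hφS fun μ hμ => by
    simp only [ContinuousMap.neg_apply, integral_neg, h μ hμ]
    linarith
  filter_upwards [hupper, hlower] with N hN hN' b hb
  have hneg := hN' b hb
  rw [ContinuousMap.coe_neg, birkhoffAverage_neg, Pi.neg_apply, Pi.neg_apply] at hneg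
  rw [Real.dist_eq, abs_lt]
  constructor <;> linarith [hN b hb]

-- The averages are asymptotically at most `∫ f ∂μ` on `S`, while their integral is `∫ f ∂μ`.
theorem eventually_exists_mem_lt_birkhoffAverage (hφ : Continuous φ) (hS : IsClosed S)
    (hφS : Set.MapsTo φ S S) {f : C(X, ℝ)} {μ : ProbabilityMeasure X}
    (hμ : μ ∈ invariantMeasures φ S)
    (hmax : IsMaxOn (fun ν : ProbabilityMeasure X => ∫ p, f p ∂(ν : Measure X))
      (invariantMeasures φ S) μ)
    {β : ℝ} (hβ : β < ∫ p, f p ∂(μ : Measure X)) {s : Set X} (hs : (μ : Measure X) s ≠ 0) :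
    ∀ᶠ N in atTop, ∀ n : ℕ, ∃ t ∈ s, β < birkhoffAverage ℝ φ f N (φ^[n] t) := by
  set γ := ∫ p, f p ∂(μ : Measure X)
  have hm : 0 < (μ : Measure X).real s := ENNReal.toReal_pos hs (measure_ne_top _ _)
  set η := (γ - β) * (μ : Measure X).real s / 2 with hη
  have hη0 : 0 < η := by have := sub_pos.2 hβ; positivity
  have hupper := eventually_birkhoffAverage_lt (f := f) (c := γ + η) hφ hS hφS
    fun ν hν => (hmax hν).trans_lt (by linarith)
  filter_upwards [hupper, eventually_ne_atTop 0] with N hN hN0 n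
  have hcont := continuous_birkhoffAverage hφ f.continuous N
  have hint : ∫ p, birkhoffAverage ℝ φ f N (φ^[n] p) ∂(μ : Measure X) = γ :=
    (integral_comp_of_measurePreserving (hμ.1.iterate n) hcont.aestronglyMeasurable).trans
      (integral_birkhoffAverage_eq_integral hμ.1 (integrable_continuousMap _ f) hN0)
  refine (frequently_ae_mem_and_lt_of_integral (C := γ + η)
    (integrable_continuousMap _ ⟨_, hcont.comp (hφ.iterate n)⟩)
    (hμ.2.mono fun p hp => (hN _ (hφS.iterate n hp)).le) (by linarith) ?_).exists
  simp only [ContinuousMap.coe_mk, Function.comp_apply, hint]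
  nlinarith

theorem eventually_exists_mem_birkhoffAverage_lt (hφ : Continuous φ) (hS : IsClosed S)
    (hφS : Set.MapsTo φ S S) {f : C(X, ℝ)} {μ : ProbabilityMeasure X}
    (hμ : μ ∈ invariantMeasures φ S)
    (hmin : IsMinOn (fun ν : ProbabilityMeasure X => ∫ p, f p ∂(ν : Measure X))
      (invariantMeasures φ S) μ)
    {α : ℝ} (hα : ∫ p, f p ∂(μ : Measure X) < α) {s : Set X} (hs : (μ : Measure X) s ≠ 0) :
    ∀ᶠ N in atTop, ∀ n : ℕ, ∃ t ∈ s, birkhoffAverage ℝ φ f N (φ^[n] t) < α := by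
  have hmax := eventually_exists_mem_lt_birkhoffAverage (f := -f) (β := -α) hφ hS hφS hμ
    (by simpa only [ContinuousMap.neg_apply, integral_neg] using hmin.neg)
    (by simpa only [ContinuousMap.neg_apply, integral_neg, neg_lt_neg_iff] using hα) hs
  simpa only [ContinuousMap.coe_neg, birkhoffAverage_neg, Pi.neg_apply, neg_lt_neg_iff] using hmax

end InvariantMeasures

theorem IsTameSeq.not_oscillating_birkhoffAverage {X : Type*} [TopologicalSpace X] [T2Space X]
    [CompactSpace X] [MeasurableSpace X] [BorelSpace X] {φ : X → X} (hφ : Continuous φ)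
    {f : C(X, ℝ)} (hf : IsTameSeq fun n => f ∘ φ^[n]) {N : ℕ → ℕ} (hN : ∀ k, N k ≠ 0)
    (n : ℕ → ℕ) {α β : ℝ} (hαβ : α < β) {D : Set X} (hD : D.Nonempty) :
    ¬ ∀ O, IsOpen O → (O ∩ D).Nonempty → ∀ᶠ k in atTop,
      (∃ p ∈ O ∩ D, birkhoffAverage ℝ φ f (N k) (φ^[n k] p) < α) ∧
        ∃ p ∈ O ∩ D, β < birkhoffAverage ℝ φ f (N k) (φ^[n k] p) := by
  let g (j : ℕ) : C(X, ℝ) := f.comp ⟨φ^[j], hφ.iterate j⟩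
  let y (k : ℕ) : C(X, ℝ) := ∑ j ∈ Finset.range (N k), (N k : ℝ)⁻¹ • g (j + n k)
  have hy (k : ℕ) (p : X) : y k p = birkhoffAverage ℝ φ f (N k) (φ^[n k] p) := by
    simp [y, g, birkhoffAverage, birkhoffSum, Finset.mul_sum, Function.iterate_add_apply]
  have hyconv (k : ℕ) : y k ∈ convexHull ℝ (Set.range g) :=
    (convex_convexHull ℝ _).sum_mem (fun _ _ => by positivity) (by simp [hN k])
      fun j _ => subset_convexHull ℝ _ ⟨j + n k, rfl⟩
  simpa only [hy] using IsTameSeq.not_oscillating_of_mem_convexHull (f := g) hf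
    (C := ‖f‖) (fun j => (ContinuousMap.norm_le _ (norm_nonneg f)).2 fun p =>
      f.norm_coe_le_norm _) hyconv hαβ hD

section MinimalSets

variable {X : Type*} [TopologicalSpace X] {φ : X → X} {M S : Set X} {p : X}

theorem self_mem_orbitClosure (φ : X → X) (p : X) : p ∈ orbitClosure φ p :=
  subset_closure ⟨0, rfl⟩

theorem mapsTo_orbitClosure (hφ : Continuous φ) (p : X) :
    Set.MapsTo φ (orbitClosure φ p) (orbitClosure φ p) := by
  refine Set.MapsTo.closure ?_ hφ
  rintro _ ⟨n, rfl⟩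
  exact ⟨n + 1, Function.iterate_succ_apply' φ n p⟩

theorem orbitClosure_subset (hS : IsClosed S) (hφS : Set.MapsTo φ S S) (hp : p ∈ S) :
    orbitClosure φ p ⊆ S :=
  closure_minimal (Set.range_subset_iff.2 fun n => hφS.iterate n hp) hS

theorem exists_iterate_mem_of_inter_orbitClosure_nonempty {O : Set X} (hO : IsOpen O)
    (h : (O ∩ orbitClosure φ p).Nonempty) : ∃ n, φ^[n] p ∈ O := by
  obtain ⟨t, htO, ht⟩ := h
  obtain ⟨_, hn, n, rfl⟩ := mem_closure_iff.1 ht O hO htO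
  exact ⟨n, hn⟩

theorem exists_isMinimalSet_subset [CompactSpace X] (hS : IsClosed S) (hne : S.Nonempty)
    (hφS : Set.MapsTo φ S S) : ∃ M, IsMinimalSet φ M ∧ M ⊆ S := by
  let closedInvariant : Set (Set X) :=
    {Y | Y.Nonempty ∧ IsClosed Y ∧ Set.MapsTo φ Y Y}
  have hchain : ∀ C ⊆ closedInvariant, IsChain (· ⊆ ·) C → C.Nonempty →
      ∃ L ∈ closedInvariant, ∀ Y ∈ C, L ⊆ Y := by
    intro C hC hchainC hCne
    have := hCne.to_subtype
    refine ⟨⋂₀ C, ⟨?_, isClosed_sInter fun Y hY => (hC hY).2.1,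
      fun t ht Y hY => (hC hY).2.2 (ht Y hY)⟩, fun Y hY => Set.sInter_subset_of_mem hY⟩
    have hdirected : DirectedOn (· ⊇ ·) C := fun Y hY Z hZ =>
      (hchainC.total hY hZ).elim (fun h => ⟨Y, hY, subset_rfl, h⟩) fun h => ⟨Z, hZ, h, subset_rfl⟩
    exact IsCompact.nonempty_sInter_of_directed_nonempty_isCompact_isClosed hdirected
      (fun Y hY => (hC hY).1) (fun Y hY => (hC hY).2.1.isCompact) fun Y hY => (hC hY).2.1
  obtain ⟨M, hMS, hM⟩ := zorn_superset_nonempty closedInvariant hchain S ⟨hne, hS, hφS⟩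
  exact ⟨M, ⟨hM.prop.1, hM.prop.2.1, hM.prop.2.2, fun Y hYM hYne hY hφY =>
    hM.eq_of_subset ⟨hYne, hY, hφY⟩ hYM⟩, hMS⟩

theorem IsMinimalSet.orbitClosure_eq (hM : IsMinimalSet φ M) (hφ : Continuous φ) (hp : p ∈ M) :
    orbitClosure φ p = M :=
  hM.2.2.2 _ (orbitClosure_subset hM.2.1 hM.2.2.1 hp) ⟨p, self_mem_orbitClosure φ p⟩
    isClosed_closure (mapsTo_orbitClosure hφ p)

theorem IsMinimalSet.eq_of_inter_nonempty {M' : Set X} (hM : IsMinimalSet φ M)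
    (hM' : IsMinimalSet φ M') (h : (M ∩ M').Nonempty) : M = M' := by
  have hclosed := hM.2.1.inter hM'.2.1
  have hmaps : Set.MapsTo φ (M ∩ M') (M ∩ M') := hM.2.2.1.inter_inter hM'.2.2.1
  exact (hM.2.2.2 _ Set.inter_subset_left h hclosed hmaps).symm.trans
    (hM'.2.2.2 _ Set.inter_subset_right h hclosed hmaps)

theorem IsMinimalSet.measure_inter_ne_zero [MeasurableSpace X] [OpensMeasurableSpace X]
    (hM : IsMinimalSet φ M) (hφ : Continuous φ) {μ : Measure X} [NeZero μ]
    (hμ : MeasurePreserving φ μ μ) (hμM : ∀ᵐ p ∂μ, p ∈ M) {O : Set X} (hO : IsOpen O)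
    (hOM : (O ∩ M).Nonempty) : μ (O ∩ M) ≠ 0 := by
  rw [Set.inter_comm, Measure.measure_inter_eq_of_ae hμM]
  intro hzero
  have hpreimage (n : ℕ) : ∀ᵐ p ∂μ, φ^[n] p ∉ O := by
    have hn : μ (φ^[n] ⁻¹' O) = 0 := by
      rw [(hμ.iterate n).measure_preimage hO.measurableSet.nullMeasurableSet, hzero]
    exact measure_eq_zero_iff_ae_notMem.1 hn
  obtain ⟨p, hpM, hpO⟩ := (hμM.and (ae_all_iff.2 hpreimage)).exists
  obtain ⟨n, hn⟩ := exists_iterate_mem_of_inter_orbitClosure_nonempty hO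
    (by rwa [hM.orbitClosure_eq hφ hpM])
  exact hpO n hn

section UniqueMinimalSet

variable [CompactSpace X] {U : Set X}

theorem exists_iterate_mem_of_unique_minimalSet (hφ : Continuous φ) (hS : IsClosed S)
    (hφS : Set.MapsTo φ S S) (huniq : ∀ M', IsMinimalSet φ M' → M' ⊆ S → M' = M)
    (hU : IsOpen U) (hMU : M ⊆ U) (hp : p ∈ S) : ∃ n, φ^[n] p ∈ U := by
  obtain ⟨M', hM', hM'p⟩ := exists_isMinimalSet_subset isClosed_closure
    ⟨p, self_mem_orbitClosure φ p⟩ (mapsTo_orbitClosure hφ p)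
  obtain rfl := huniq M' hM' (hM'p.trans (orbitClosure_subset hS hφS hp))
  obtain ⟨b, hb⟩ := hM'.1
  exact exists_iterate_mem_of_inter_orbitClosure_nonempty hU ⟨b, hMU hb, hM'p hb⟩

theorem exists_iterate_finset_mem_of_unique_minimalSet (hφ : Continuous φ) (hS : IsClosed S)
    (hφS : Set.MapsTo φ S S) (hφM : Set.MapsTo φ M M)
    (huniq : ∀ M', IsMinimalSet φ M' → M' ⊆ S → M' = M) (hU : IsOpen U) (hMU : M ⊆ U)
    {F : Set X} (hF : F.Finite) (hFS : F ⊆ S) : ∃ n, ∀ p ∈ F, φ^[n] p ∈ U := by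
  induction F, hF using Set.Finite.induction_on generalizing U with
  | empty => exact ⟨0, by simp⟩
  | @insert a F _ _ ih =>
    obtain ⟨haS, hFS⟩ := Set.insert_subset_iff.1 hFS
    obtain ⟨T, hT⟩ := hS.isCompact.elim_finite_subcover (fun j : ℕ => φ^[j] ⁻¹' U)
      (fun j => hU.preimage (hφ.iterate j)) fun p hp => Set.mem_iUnion.2
        (exists_iterate_mem_of_unique_minimalSet hφ hS hφS huniq hU hMU hp)
    obtain ⟨n, hn⟩ := ih (U := ⋂ j ∈ T, φ^[j] ⁻¹' U)
      (isOpen_biInter_finset fun j _ => hU.preimage (hφ.iterate j))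
      (fun b hb => Set.mem_iInter₂.2 fun j _ => hMU (hφM.iterate j hb)) hFS
    obtain ⟨j, hj, hja⟩ := Set.mem_iUnion₂.1 (hT (hφS.iterate n haS))
    refine ⟨j + n, fun p hp => ?_⟩
    rw [Function.iterate_add_apply]
    rcases hp with rfl | hpF
    · exact hja
    · exact Set.mem_iInter₂.1 (hn p hpF) j hj

end UniqueMinimalSet

end MinimalSets

section Ellis

variable {X : Type*} [TopologicalSpace X] {φ p q : X → X} {S : Set X}

theorem isClosed_EllisE (φ : X → X) : IsClosed (EllisE φ) := isClosed_closure

theorem continuous_comp_right (q : X → X) : Continuous fun p : X → X => p ∘ q :=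
  continuous_pi fun t => continuous_apply (q t)

theorem comp_mem_EllisE (hφ : Continuous φ) (hp : p ∈ EllisE φ) (hq : q ∈ EllisE φ) :
    p ∘ q ∈ EllisE φ := by
  have hiter (n : ℕ) : φ^[n] ∘ q ∈ EllisE φ := by
    have hcont : Continuous fun f : X → X => φ^[n] ∘ f :=
      continuous_pi fun t => (hφ.iterate n).comp (continuous_apply t)
    refine Set.MapsTo.closure ?_ hcont hq
    rintro _ ⟨m, rfl⟩
    exact ⟨n + m, Function.iterate_add φ n m⟩
  have hsub : EllisE φ ⊆ (· ∘ q) ⁻¹' EllisE φ :=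
    closure_minimal (Set.range_subset_iff.2 hiter)
      ((isClosed_EllisE φ).preimage (continuous_comp_right q))
  exact hsub hp

theorem mapsTo_of_mem_EllisE (hS : IsClosed S) (hφS : Set.MapsTo φ S S) (hp : p ∈ EllisE φ) :
    Set.MapsTo p S S := by
  intro t ht
  have hsub : EllisE φ ⊆ Function.eval t ⁻¹' S :=
    closure_minimal (Set.range_subset_iff.2 fun n => hφS.iterate n ht)
      (hS.preimage (continuous_apply t))
  exact hsub hp

theorem exists_mem_EllisE_apply_eq [CompactSpace X] [T2Space X] {a b : X}
    (hb : b ∈ orbitClosure φ a) : ∃ p ∈ EllisE φ, p a = b := by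
  refine closure_minimal (Set.range_subset_iff.2 fun n => ?_)
    ((isClosed_EllisE φ).isCompact.image (continuous_apply a)).isClosed hb
  exact ⟨φ^[n], subset_closure ⟨n, rfl⟩, rfl⟩

theorem exists_idempotent_mem_EllisE [CompactSpace X] [T2Space X] (hφ : Continuous φ) {a : X}
    (hS : IsClosed S) (hφS : Set.MapsTo φ S S) (h : (S ∩ orbitClosure φ a).Nonempty) :
    ∃ u ∈ EllisE φ, u ∘ u = u ∧ u a ∈ S := by
  let compSemigroup : Semigroup (X → X) :=
    { mul := fun p q => p ∘ q, mul_assoc := fun _ _ _ => rfl }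
  obtain ⟨b, hbS, hb⟩ := h
  obtain ⟨p, hp, rfl⟩ := exists_mem_EllisE_apply_eq hb
  obtain ⟨u, ⟨hu, huS⟩, hidem⟩ := exists_idempotent_in_compact_subsemigroup
    continuous_comp_right {p | p ∈ EllisE φ ∧ p a ∈ S} ⟨p, hp, hbS⟩
    ((isClosed_EllisE φ).inter (hS.preimage (continuous_apply a))).isCompact
    fun p hp q hq => ⟨comp_mem_EllisE (p := p) hφ hp.1 hq.1,
      mapsTo_of_mem_EllisE hS hφS hp.1 hq.2⟩
  exact ⟨u, hu, hidem, huS⟩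

end Ellis

section Proximality

theorem proximal_iff_forall_exists_dist_lt {X : Type*} [PseudoMetricSpace X] {φ : X → X}
    {a b : X} : Proximal φ a b ↔ ∀ ε > 0, ∃ n : ℕ, dist (φ^[n] a) (φ^[n] b) < ε := by
  have hbdd : BddBelow (Set.range fun n : ℕ => dist (φ^[n] a) (φ^[n] b)) :=
    ⟨0, by rintro _ ⟨n, rfl⟩; exact dist_nonneg⟩
  refine ⟨fun h ε hε => exists_lt_of_ciInf_lt (h.trans_lt hε), fun h => ?_⟩
  refine le_antisymm (le_of_forall_gt fun ε hε => ?_) (le_ciInf fun n => dist_nonneg)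
  obtain ⟨n, hn⟩ := h ε hε
  exact (ciInf_le hbdd n).trans_lt hn

theorem Proximal.symm {X : Type*} [PseudoMetricSpace X] {φ : X → X} {a b : X}
    (h : Proximal φ a b) : Proximal φ b a := by
  simpa only [Proximal, dist_comm] using h

variable {X : Type*} [MetricSpace X] {φ : X → X} {M : Set X} {a b : X}

theorem proximal_of_idempotent_mem_EllisE {u : X → X} (hu : u ∈ EllisE φ) (hidem : u ∘ u = u)
    (a : X) : Proximal φ a (u a) := by
  rw [proximal_iff_forall_exists_dist_lt]
  intro ε hε
  have hopen : IsOpen {s : X → X | dist (s a) (s (u a)) < ε} :=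
    isOpen_lt ((continuous_apply a).dist (continuous_apply (u a))) continuous_const
  have hmem : dist (u a) (u (u a)) < ε := by
    rwa [show u (u a) = u a from congrFun hidem a, dist_self]
  obtain ⟨_, hn, n, rfl⟩ := mem_closure_iff.1 hu _ hopen hmem
  exact ⟨n, hn⟩

variable [CompactSpace X]

theorem IsMinimalSet.exists_mem_proximal (hM : IsMinimalSet φ M) (hφ : Continuous φ)
    (hMa : M ⊆ orbitClosure φ a) : ∃ b ∈ M, Proximal φ a b := by
  obtain ⟨u, hu, hidem, huM⟩ := exists_idempotent_mem_EllisE hφ hM.2.1 hM.2.2.1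
    (hM.1.mono (Set.subset_inter subset_rfl hMa))
  exact ⟨u a, huM, proximal_of_idempotent_mem_EllisE hu hidem a⟩

theorem IsMinimalSet.eq_of_proximal {M' : Set X} (hM : IsMinimalSet φ M)
    (hM' : IsMinimalSet φ M') (ha : a ∈ M) (hb : b ∈ M') (hab : Proximal φ a b) : M = M' := by
  refine hM.eq_of_inter_nonempty hM' ?_
  by_contra hdisj
  obtain ⟨δ, hδ, hdist⟩ := Metric.exists_pos_forall_lt_edist hM.2.1.isCompact hM'.2.1
    (Set.disjoint_iff_inter_eq_empty.2 (Set.not_nonempty_iff_eq_empty.1 hdisj))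
  obtain ⟨n, hn⟩ := proximal_iff_forall_exists_dist_lt.1 hab δ (by exact_mod_cast hδ)
  have hlt := hdist _ (hM.2.2.1.iterate n ha) _ (hM'.2.2.1.iterate n hb)
  rw [edist_nndist, ENNReal.coe_lt_coe, ← NNReal.coe_lt_coe, coe_nndist] at hlt
  exact hlt.not_gt hn

theorem eq_of_isMinimalSet_subset_orbitClosure (hφ : Continuous φ)
    (htrans : ∀ a b c : X, Proximal φ a b → Proximal φ b c → Proximal φ a c) {M' : Set X}
    (hM : IsMinimalSet φ M) (hMa : M ⊆ orbitClosure φ a) (hM' : IsMinimalSet φ M')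
    (hM'a : M' ⊆ orbitClosure φ a) : M = M' := by
  obtain ⟨b, hb, hab⟩ := hM.exists_mem_proximal hφ hMa
  obtain ⟨c, hc, hac⟩ := hM'.exists_mem_proximal hφ hM'a
  exact hM.eq_of_proximal hM' hb hc (htrans _ _ _ hab.symm hac)

end Proximality

section UniqueAverage

variable {X : Type*} [MetricSpace X] [CompactSpace X] {φ : X → X} {f : C(X, ℝ)}
  {M S : Set X}

theorem exists_times_forall_le_birkhoffAverage_lt (hφ : Continuous φ) (hS : IsClosed S)
    (hφS : Set.MapsTo φ S S) (hφM : Set.MapsTo φ M M)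
    (huniq : ∀ M', IsMinimalSet φ M' → M' ⊆ S → M' = M) {α : ℝ}
    (hα : ∀ᶠ N in atTop, ∀ b ∈ M, birkhoffAverage ℝ φ f N b < α) {s : ℕ → X}
    (hs : ∀ i, s i ∈ S) :
    ∃ N n : ℕ → ℕ, (∀ k, k < N k) ∧
      ∀ k, ∀ i ≤ k, birkhoffAverage ℝ φ f (N k) (φ^[n k] (s i)) < α := by
  choose N hN using fun k => (hα.and (eventually_gt_atTop k)).exists
  have hn (k : ℕ) : ∃ n : ℕ, ∀ i ≤ k, birkhoffAverage ℝ φ f (N k) (φ^[n] (s i)) < α := by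
    obtain ⟨n, hn⟩ := exists_iterate_finset_mem_of_unique_minimalSet hφ hS hφS hφM huniq
      (U := {t | birkhoffAverage ℝ φ f (N k) t < α})
      (isOpen_lt (continuous_birkhoffAverage hφ f.continuous _) continuous_const)
      (fun b hb => (hN k).1 b hb) ((Set.finite_Iic k).image s)
      (Set.image_subset_iff.2 fun i _ => hs i)
    exact ⟨n, fun i hi => hn _ ⟨i, hi, rfl⟩⟩
  choose n hn using hn
  exact ⟨N, n, fun k => (hN k).2, hn⟩

variable [MeasurableSpace X] [BorelSpace X]

theorem IsMinimalSet.integral_le_of_isMaxOn_of_isMinOn (hM : IsMinimalSet φ M)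
    (hφ : Continuous φ) (hf : IsTameSeq fun n => f ∘ φ^[n]) {μ ν : ProbabilityMeasure X}
    (hμ : μ ∈ invariantMeasures φ M) (hν : ν ∈ invariantMeasures φ M)
    (hmax : IsMaxOn (fun ρ : ProbabilityMeasure X => ∫ p, f p ∂(ρ : Measure X))
      (invariantMeasures φ M) μ)
    (hmin : IsMinOn (fun ρ : ProbabilityMeasure X => ∫ p, f p ∂(ρ : Measure X))
      (invariantMeasures φ M) ν) :
    ∫ p, f p ∂(μ : Measure X) ≤ ∫ p, f p ∂(ν : Measure X) := by
  by_contra! hlt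
  obtain ⟨β, hνβ, hβμ⟩ := exists_between hlt
  obtain ⟨α, hνα, hαβ⟩ := exists_between hνβ
  refine hf.not_oscillating_birkhoffAverage hφ (N := fun k => k + 1)
    (fun k => k.succ_ne_zero) (fun _ => 0) hαβ hM.1 fun O hO hOM => ?_
  have hlow := eventually_exists_mem_birkhoffAverage_lt hφ hM.2.1 hM.2.2.1 hν hmin hνα
    (hM.measure_inter_ne_zero hφ hν.1 hν.2 hO hOM)
  have hhigh := eventually_exists_mem_lt_birkhoffAverage hφ hM.2.1 hM.2.2.1 hμ hmax hβμ
    (hM.measure_inter_ne_zero hφ hμ.1 hμ.2 hO hOM)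
  filter_upwards [(tendsto_add_atTop_nat 1).eventually (hlow.and hhigh)] with k hk
  exact ⟨hk.1 0, hk.2 0⟩

theorem IsMinimalSet.exists_forall_integral_eq (hM : IsMinimalSet φ M) (hφ : Continuous φ)
    (hf : IsTameSeq fun n => f ∘ φ^[n]) :
    ∃ γ : ℝ, ∀ μ ∈ invariantMeasures φ M, ∫ p, f p ∂(μ : Measure X) = γ := by
  obtain ⟨μ, hμ, hmax⟩ :=
    exists_invariantMeasure_isMaxOn_integral hφ hM.2.1 hM.2.2.1 hM.1 f
  obtain ⟨ν, hν, hmin⟩ :=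
    exists_invariantMeasure_isMinOn_integral hφ hM.2.1 hM.2.2.1 hM.1 f
  have hle := hM.integral_le_of_isMaxOn_of_isMinOn hφ hf hμ hν hmax hmin
  exact ⟨_, fun ρ hρ => le_antisymm (hmax hρ) (hle.trans (hmin hρ))⟩

-- If `∫ f ∂μ > γ` for a maximizing `μ`, then along suitable orbit segments the averages are
-- close to `γ` on a dense sequence of `μ.support`, yet close to `∫ f ∂μ` somewhere in every
-- nonempty relatively open subset: they oscillate on `μ.support`.
theorem integral_le_of_unique_minimalSet (hφ : Continuous φ)
    (hf : IsTameSeq fun n => f ∘ φ^[n]) (hS : IsClosed S) (hφS : Set.MapsTo φ S S)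
    (hM : IsMinimalSet φ M) (huniq : ∀ M', IsMinimalSet φ M' → M' ⊆ S → M' = M) {γ : ℝ}
    (hγ : ∀ μ ∈ invariantMeasures φ M, ∫ p, f p ∂(μ : Measure X) = γ)
    {ν : ProbabilityMeasure X} (hν : ν ∈ invariantMeasures φ S) :
    ∫ p, f p ∂(ν : Measure X) ≤ γ := by
  obtain ⟨μ, hμ, hmax⟩ :=
    exists_invariantMeasure_isMaxOn_integral hφ hS hφS hν.2.exists f
  refine (hmax hν).trans (le_of_not_gt fun hlt => ?_)
  obtain ⟨β, hγβ, hβμ⟩ := exists_between hlt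
  obtain ⟨α, hγα, hαβ⟩ := exists_between hγβ
  let D := (μ : Measure X).support
  have hDS : D ⊆ S := Measure.support_subset_of_isClosed hS hμ.2
  have hD : D.Nonempty := Measure.nonempty_support (NeZero.ne _)
  have := hD.to_subtype
  let s := TopologicalSpace.denseSeq D
  obtain ⟨N, n, hkN, hNα⟩ := exists_times_forall_le_birkhoffAverage_lt (f := f) (α := α)
    (s := fun i => s i) hφ hS hφS hM.2.2.1 huniq
    (eventually_birkhoffAverage_lt hφ hM.2.1 hM.2.2.1 fun ρ hρ => (hγ ρ hρ).trans_lt hγα)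
    fun i => hDS (s i).2
  have hN : Tendsto N atTop atTop := tendsto_atTop_mono (fun k => (hkN k).le) tendsto_id
  refine hf.not_oscillating_birkhoffAverage hφ (fun k => (hkN k).ne_bot) n hαβ hD
    fun O hO hOD => ?_
  obtain ⟨t, htO, htD⟩ := hOD
  have hOμ : (μ : Measure X) (O ∩ D) ≠ 0 := by
    have hμD : ∀ᵐ p ∂(μ : Measure X), p ∈ D := Measure.support_mem_ae
    rw [Set.inter_comm, Measure.measure_inter_eq_of_ae hμD]
    exact ((Measure.mem_support_iff_forall t).1 htD O (hO.mem_nhds htO)).ne'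
  have hhigh := eventually_exists_mem_lt_birkhoffAverage hφ hS hφS hμ hmax hβμ hOμ
  obtain ⟨i, hi⟩ := (TopologicalSpace.denseRange_denseSeq D).exists_mem_open
    (hO.preimage continuous_subtype_val) ⟨⟨t, htD⟩, htO⟩
  filter_upwards [hN.eventually hhigh, eventually_ge_atTop i] with k hk hik
  exact ⟨⟨s i, ⟨hi, (s i).2⟩, hNα k i hik⟩, hk (n k)⟩

theorem tendstoUniformlyOn_birkhoffAverage_of_unique_minimalSet (hφ : Continuous φ)
    (hf : ∀ f : C(X, ℝ), IsTameSeq fun n => f ∘ φ^[n]) (hS : IsClosed S)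
    (hφS : Set.MapsTo φ S S) (hM : IsMinimalSet φ M)
    (huniq : ∀ M', IsMinimalSet φ M' → M' ⊆ S → M' = M) (f : C(X, ℝ)) :
    ∃ γ : ℝ, TendstoUniformlyOn (birkhoffAverage ℝ φ f) (fun _ => γ) atTop S := by
  obtain ⟨γ, hγ⟩ := hM.exists_forall_integral_eq hφ (hf f)
  refine ⟨γ, tendstoUniformlyOn_birkhoffAverage hφ hS hφS fun μ hμ => le_antisymm
    (integral_le_of_unique_minimalSet hφ (hf f) hS hφS hM huniq hγ hμ) ?_⟩
  have hneg : ∫ p, (-f) p ∂(μ : Measure X) ≤ -γ :=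
    integral_le_of_unique_minimalSet hφ (hf (-f)) hS hφS hM huniq
      (fun ρ hρ => by simp only [ContinuousMap.neg_apply, integral_neg, hγ ρ hρ]) hμ
  simpa only [ContinuousMap.neg_apply, integral_neg, neg_le_neg_iff] using hneg

theorem Tame.exists_tendsto_birkhoffAverage {hφ : Continuous φ} (htame : Tame φ hφ)
    (htrans : ∀ a b c : X, Proximal φ a b → Proximal φ b c → Proximal φ a c) (f : C(X, ℝ))
    (p : X) : ∃ γ : ℝ, Tendsto (birkhoffAverage ℝ φ f · p) atTop (𝓝 γ) := by
  have hclosed : IsClosed (orbitClosure φ p) := isClosed_closure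
  have hφp := mapsTo_orbitClosure hφ p
  obtain ⟨M, hM, hMp⟩ := exists_isMinimalSet_subset hclosed ⟨p, self_mem_orbitClosure φ p⟩ hφp
  obtain ⟨γ, hγ⟩ := tendstoUniformlyOn_birkhoffAverage_of_unique_minimalSet hφ htame.isTameSeq
    hclosed hφp hM (fun M' hM' hM'p =>
      eq_of_isMinimalSet_subset_orbitClosure hφ htrans hM' hM'p hM hMp) f
  exact ⟨γ, hγ.tendsto_at (self_mem_orbitClosure φ p)⟩

theorem exists_tendsto_average_integral (hφ : Continuous φ)
    (h : ∀ p, ∃ γ : ℝ, Tendsto (birkhoffAverage ℝ φ f · p) atTop (𝓝 γ)) (ν : Measure X)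
    [IsFiniteMeasure ν] :
    ∃ c : ℝ, Tendsto (fun n : ℕ => (n : ℝ)⁻¹ * ∑ j ∈ Finset.range n, ∫ p, f (φ^[j] p) ∂ν)
      atTop (𝓝 c) := by
  choose γ hγ using h
  refine ⟨∫ p, γ p ∂ν, ?_⟩
  have hlim : Tendsto (fun N => ∫ p, birkhoffAverage ℝ φ f N p ∂ν) atTop (𝓝 (∫ p, γ p ∂ν)) :=
    tendsto_integral_of_dominated_convergence (fun _ => ‖f‖)
      (fun N => (continuous_birkhoffAverage hφ f.continuous N).aestronglyMeasurable)
      (integrable_const _)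
      (fun N => .of_forall fun p => abs_birkhoffAverage_le f.norm_coe_le_norm N p)
      (.of_forall hγ)
  exact hlim.congr <| integral_birkhoffAverage_eq_sum fun k =>
    integrable_continuousMap ν (f.comp ⟨φ^[k], hφ.iterate k⟩)

end UniqueAverage

/-- Proposition 3.9 (second part): for a tame semicascade with transitive proximality
relation, the Cesàro means `(1/n) Σ_{j<n} ∫ x ∘ φ^j dμ` converge as `n → ∞` for every
`x ∈ C(Ω,ℝ)` and every finite signed Borel measure `μ`. -/
theorem stmt_19 (φ : Ω → Ω) (hφ : Continuous φ) (htame : Tame φ hφ)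
    (htrans : ∀ a b c : Ω, Proximal φ a b → Proximal φ b c → Proximal φ a c) :
    ∀ (x : C(Ω, ℝ)) (μ : SignedMeasure Ω), ∃ c : ℝ,
      Tendsto (fun n : ℕ => (n : ℝ)⁻¹ * ∑ j ∈ Finset.range n, spair (fun ω => x (φ^[j] ω)) μ)
        atTop (𝓝 c) := by
  intro x μ
  have hlim := htame.exists_tendsto_birkhoffAverage htrans x
  obtain ⟨c₁, h₁⟩ := exists_tendsto_average_integral hφ hlim μ.toJordanDecomposition.posPart
  obtain ⟨c₂, h₂⟩ := exists_tendsto_average_integral hφ hlim μ.toJordanDecomposition.negPart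
  refine ⟨c₁ - c₂, (h₁.sub h₂).congr fun n => ?_⟩
  simp only [spair, ← mul_sub, ← Finset.sum_sub_distrib]
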